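/- arXiv:2206.13912 — 6 statements merged into one kernel-verified Lean document; each statement's English description precedes it below -/
import Mathlib

section
/- Let A be a finite-dimensional evolution algebra over a field K with natural basis B = {e_i}_{i∈Λ} and structure matrix (ω_ji) (so e_i² = Σ_j ω_ji e_j), and let E be the directed graph of A relative to B. For any subset S ⊆ Λ, the linear span of {e_i : i ∈ T(S)}, where T(S) consists of the vertices of S together with all vertices reachable from a vertex of S by a directed path, is a (two-sided) ideal of A. -/
section Hereditary

variable {ι : Type*}

/-- Hereditary sets of vertices of the directed graph with edge relation `r`: those that no edge
leaves. They are the index sets whose basis vectors span an ideal of an evolution algebra. -/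
def IsHereditary (r : ι → ι → Prop) (H : Set ι) : Prop :=
  ∀ ⦃i j : ι⦄, i ∈ H → r i j → j ∈ H

theorem isHereditary_setOf_reflTransGen (r : ι → ι → Prop) (S : Set ι) :
    IsHereditary r {v | ∃ u ∈ S, Relation.ReflTransGen r u v} :=
  fun _ _ ⟨u, hu, hui⟩ hij ↦ ⟨u, hu, hui.tail hij⟩

end Hereditary

section Span

variable {R A ι : Type*} [CommSemiring R] [NonUnitalNonAssocSemiring A] [Module R A]

theorem mul_mem_of_mem_span_of_mem_span [SMulCommClass R A A] [IsScalarTower R A A]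
    {s t : Set A} {P : Submodule R A} (hst : ∀ x ∈ s, ∀ y ∈ t, x * y ∈ P) {x y : A}
    (hx : x ∈ Submodule.span R s) (hy : y ∈ Submodule.span R t) : x * y ∈ P := by
  have hle : Submodule.map₂ (LinearMap.mul R A) (Submodule.span R s) (Submodule.span R t) ≤ P := by
    rw [Submodule.map₂_span_span, Submodule.span_le]
    exact Set.image2_subset_iff.mpr hst
  exact hle (Submodule.apply_mem_map₂ _ hx hy)

/-- The edge relation of the directed graph of `A` relative to the basis `b`. The entry `ω j i` of
the structure matrix is `b.repr (b i * b i) j`, so edges run from column to row indices. -/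
def structureGraph (b : Module.Basis ι R A) (i j : ι) : Prop :=
  b.repr (b i * b i) j ≠ 0

variable {b : Module.Basis ι R A} {H : Set ι}

theorem IsHereditary.basis_mul_self_mem_span_image
    (hH : IsHereditary (structureGraph b) H) {i : ι} (hi : i ∈ H) :
    b i * b i ∈ Submodule.span R (b '' H) :=
  b.mem_span_image.mpr fun _ hj ↦ hH hi (Finsupp.mem_support_iff.mp hj)

theorem IsHereditary.basis_mul_basis_mem_span_image
    (hH : IsHereditary (structureGraph b) H)
    (hnat : ∀ i j : ι, i ≠ j → b i * b j = 0) {i j : ι} (hij : i ∈ H ∨ j ∈ H) :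
    b i * b j ∈ Submodule.span R (b '' H) := by
  obtain rfl | hne := eq_or_ne i j
  · exact hH.basis_mul_self_mem_span_image (or_self_iff.mp hij)
  · rw [hnat i j hne]
    exact Submodule.zero_mem _

variable [SMulCommClass R A A] [IsScalarTower R A A]

theorem IsHereditary.mul_mem_span_image_left
    (hH : IsHereditary (structureGraph b) H)
    (hnat : ∀ i j : ι, i ≠ j → b i * b j = 0) (a : A) {x : A}
    (hx : x ∈ Submodule.span R (b '' H)) : a * x ∈ Submodule.span R (b '' H) := by
  refine mul_mem_of_mem_span_of_mem_span ?_ (b.mem_span a) hx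
  rintro _ ⟨i, rfl⟩ _ ⟨j, hj, rfl⟩
  exact hH.basis_mul_basis_mem_span_image hnat (.inr hj)

theorem IsHereditary.mul_mem_span_image_right
    (hH : IsHereditary (structureGraph b) H)
    (hnat : ∀ i j : ι, i ≠ j → b i * b j = 0) (a : A) {x : A}
    (hx : x ∈ Submodule.span R (b '' H)) : x * a ∈ Submodule.span R (b '' H) := by
  refine mul_mem_of_mem_span_of_mem_span ?_ hx (b.mem_span a)
  rintro _ ⟨i, hi, rfl⟩ _ ⟨j, rfl⟩
  exact hH.basis_mul_basis_mem_span_image hnat (.inl hi)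

end Span

theorem span_tree_isIdeal_general {R A ι : Type*} [CommSemiring R] [NonUnitalNonAssocSemiring A]
    [Module R A] [SMulCommClass R A A] [IsScalarTower R A A]
    (b : Module.Basis ι R A) (hnat : ∀ i j : ι, i ≠ j → b i * b j = 0)
    (edge : ι → ι → Prop)
    (hedge : ∀ i j : ι, edge i j ↔ b.repr (b i * b i) j ≠ 0)
    (S : Set ι)
    (T : Set ι) (hT : T = {v | ∃ u ∈ S, Relation.ReflTransGen edge u v}) :
    ∀ x ∈ Submodule.span R (⇑b '' T), ∀ a : A,
      a * x ∈ Submodule.span R (⇑b '' T) ∧ x * a ∈ Submodule.span R (⇑b '' T) := by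
  obtain rfl : edge = structureGraph b := funext₂ fun i j ↦ propext (hedge i j)
  have hereditary : IsHereditary (structureGraph b) T :=
    hT ▸ isHereditary_setOf_reflTransGen (structureGraph b) S
  exact fun x hx a ↦
    ⟨hereditary.mul_mem_span_image_left hnat a hx, hereditary.mul_mem_span_image_right hnat a hx⟩

/-- Let `A` be a finite-dimensional evolution algebra over a field `K`
with natural basis `b = {e_i}` and structure matrix `ω j i = (b.repr (e_i²)) j`, and let
the directed graph have an edge `i → j` iff `ω j i ≠ 0`.  For any `S ⊆ ι`, the span of
`{e_i : i ∈ T(S)}`, where `T(S)` is `S` together with all vertices reachable from `S`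
by a directed path, is a two-sided ideal of `A`. -/
theorem span_tree_isIdeal {K A ι : Type*} [Field K] [NonUnitalNonAssocCommRing A]
    [Module K A] [SMulCommClass K A A] [IsScalarTower K A A] [Fintype ι]
    (b : Module.Basis ι K A) (hnat : ∀ i j : ι, i ≠ j → b i * b j = 0)
    (edge : ι → ι → Prop)
    (hedge : ∀ i j : ι, edge i j ↔ b.repr (b i * b i) j ≠ 0)
    (S : Set ι)
    (T : Set ι) (hT : T = {v | ∃ u ∈ S, Relation.ReflTransGen edge u v}) :
    ∀ x ∈ Submodule.span K (⇑b '' T), ∀ a : A,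
      a * x ∈ Submodule.span K (⇑b '' T) ∧ x * a ∈ Submodule.span K (⇑b '' T) :=
  span_tree_isIdeal_general b hnat edge hedge S T hT
end

section
/- Let A be a finite-dimensional perfect evolution algebra over a field K and let E be its directed graph relative to a natural basis. If E has a closed directed path that visits every vertex, then A is a simple algebra. -/
/-!
For a natural basis, `e_i x` is the `i`-th coordinate of `x` times `e_i²`. Hence an ideal that
contains an element with nonzero `i`-th coordinate contains `e_i²`; applied to `e_i²` itself, this
carries membership of the squares along the edges of the graph. When the graph is strongly
connected, a nonzero ideal contains every `e_i²`, and the squares span a perfect algebra.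
-/

open Relation

theorem reflTransGen_of_isChain_cons_getLast {α : Type*} {r : α → α → Prop} {l : List α}
    (hne : l ≠ []) (hl : List.IsChain r (l.getLast hne :: l)) {x y : α} (hx : x ∈ l)
    (hy : y ∈ l) : ReflTransGen r x y := by
  have to_last : ReflTransGen r x (l.getLast hne) :=
    hl.backwards_cons_induction (ReflTransGen r · (l.getLast hne)) l (List.getLast_cons hne)
      (fun _ _ => .head) .refl x (List.mem_cons_of_mem _ hx)
  have from_last : ReflTransGen r (l.getLast hne) y :=
    hl.cons_induction (ReflTransGen r (l.getLast hne)) l (fun _ _ hr h => h.tail hr)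
      .refl y hy
  exact to_last.trans from_last

theorem span_range_eq_top_of_isUnit_toMatrix {ι R M : Type*} [Fintype ι] [DecidableEq ι]
    [CommRing R] [AddCommGroup M] [Module R M] (b : Module.Basis ι R M) {v : ι → M}
    (hv : IsUnit (b.toMatrix v)) : Submodule.span R (Set.range v) = ⊤ :=
  (b.is_basis_iff_det.2 ((Matrix.isUnit_iff_isUnit_det _).1 hv)).2

section NaturalBasis

variable {ι R A : Type*} [Semiring R] [NonUnitalNonAssocSemiring A] [Module R A]

/-- The edge relation of the directed graph of an evolution algebra relative to the basis `b`:
there is an edge from `i` to `j` when `b j` occurs in `b i * b i`. -/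
def EvolutionEdge (b : Module.Basis ι R A) (i j : ι) : Prop :=
  b.repr (b i * b i) j ≠ 0

theorem naturalBasis_mul_eq_repr_smul_sq [SMulCommClass R A A] {b : Module.Basis ι R A}
    (hb : Pairwise fun i j => b i * b j = 0) (i : ι) (x : A) :
    b i * x = b.repr x i • (b i * b i) := by
  suffices LinearMap.mulLeft R (b i) = (b.coord i).smulRight (b i * b i) from
    LinearMap.congr_fun this x
  refine b.ext fun j => ?_
  obtain rfl | hij := eq_or_ne i j
  · simp
  · simp [hb hij, hij.symm]

end NaturalBasis

section Ideal

variable {ι K A : Type*} [DivisionSemiring K] [NonUnitalNonAssocSemiring A] [Module K A]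
  [SMulCommClass K A A] {b : Module.Basis ι K A} {I : Submodule K A}

theorem sq_mem_of_repr_ne_zero (hb : Pairwise fun i j => b i * b j = 0)
    (hI : ∀ x ∈ I, ∀ a : A, a * x ∈ I) {x : A} (hx : x ∈ I) {i : ι} (hi : b.repr x i ≠ 0) :
    b i * b i ∈ I := by
  rw [← I.smul_mem_iff hi, ← naturalBasis_mul_eq_repr_smul_sq hb]
  exact hI x hx (b i)

theorem sq_mem_of_reflTransGen_evolutionEdge (hb : Pairwise fun i j => b i * b j = 0)
    (hI : ∀ x ∈ I, ∀ a : A, a * x ∈ I) {i j : ι} (hij : ReflTransGen (EvolutionEdge b) i j)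
    (hi : b i * b i ∈ I) : b j * b j ∈ I := by
  induction hij with
  | refl => exact hi
  | tail _ hedge hmem => exact sq_mem_of_repr_ne_zero hb hI hmem hedge

theorem eq_top_of_ne_bot_of_reflTransGen_evolutionEdge
    (hb : Pairwise fun i j => b i * b j = 0)
    (hspan : Submodule.span K (Set.range fun i => b i * b i) = ⊤)
    (hconn : ∀ i j, ReflTransGen (EvolutionEdge b) i j)
    (hI : ∀ x ∈ I, ∀ a : A, a * x ∈ I) (hne : I ≠ ⊥) : I = ⊤ := by
  obtain ⟨x, hx, hx0⟩ := I.exists_mem_ne_zero_of_ne_bot hne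
  obtain ⟨i, hi⟩ : ∃ i, b.repr x i ≠ 0 :=
    Finsupp.ne_iff.1 (b.repr.map_ne_zero_iff.2 hx0)
  have sq_mem (j : ι) : b j * b j ∈ I :=
    sq_mem_of_reflTransGen_evolutionEdge hb hI (hconn i j) (sq_mem_of_repr_ne_zero hb hI hx hi)
  rw [eq_top_iff, ← hspan, Submodule.span_le]
  exact Set.range_subset_iff.2 sq_mem

end Ideal

theorem exists_mul_ne_zero_of_span_sq_eq_top {ι R A : Type*} [Semiring R]
    [NonUnitalNonAssocSemiring A] [Module R A] [Nontrivial A] {v : ι → A}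
    (hspan : Submodule.span R (Set.range fun i => v i * v i) = ⊤) : ∃ x y : A, x * y ≠ 0 := by
  by_contra! hzero
  refine bot_ne_top (α := Submodule R A) (Eq.trans (Eq.symm ?_) hspan)
  rw [Submodule.span_eq_bot]
  rintro _ ⟨i, rfl⟩
  exact hzero _ _

theorem simple_of_closed_path_visiting_all_general {ι K A : Type*} [Nonempty ι]
    [DivisionSemiring K] [NonUnitalNonAssocSemiring A] [Module K A] [SMulCommClass K A A]
    {b : Module.Basis ι K A} (hb : Pairwise fun i j => b i * b j = 0)
    (hspan : Submodule.span K (Set.range fun i => b i * b i) = ⊤)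
    (hconn : ∀ i j, ReflTransGen (EvolutionEdge b) i j) :
    (∃ x y : A, x * y ≠ 0) ∧
      ∀ I : Submodule K A, (∀ x ∈ I, ∀ a : A, a * x ∈ I) → I = ⊥ ∨ I = ⊤ := by
  have : Nontrivial A := b.repr.toEquiv.nontrivial
  exact ⟨exists_mul_ne_zero_of_span_sq_eq_top hspan, fun I hI => or_iff_not_imp_left.2
    (eq_top_of_ne_bot_of_reflTransGen_evolutionEdge hb hspan hconn hI)⟩

/-- Let `A` be a finite-dimensional perfect evolution algebra over a field `K`
(perfect: the structure matrix relative to a natural basis is invertible) and let the directed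
graph relative to that basis have an edge `i → j` iff the `e_j`-coordinate of `e_i²` is nonzero.
If the graph has a closed directed path visiting every vertex (encoded as a nonempty list `l`
with `List.Chain edge (l.getLast h) l` containing all vertices), then `A` is a simple algebra:
`A² ≠ 0` and its only two-sided ideals are `0` and `A`. -/
theorem simple_of_closed_path_visiting_all {K A ι : Type*} [Field K]
    [NonUnitalNonAssocCommRing A] [Module K A] [SMulCommClass K A A] [IsScalarTower K A A]
    [Fintype ι] [DecidableEq ι]
    (b : Module.Basis ι K A) (hnat : ∀ i j : ι, i ≠ j → b i * b j = 0)
    (hperf : IsUnit (Matrix.of fun j i : ι => b.repr (b i * b i) j))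
    (edge : ι → ι → Prop)
    (hedge : ∀ i j : ι, edge i j ↔ b.repr (b i * b i) j ≠ 0)
    (hcycle : ∃ (l : List ι) (h : l ≠ []),
        List.Chain edge (l.getLast h) l ∧ ∀ v : ι, v ∈ l) :
    (∃ x y : A, x * y ≠ 0) ∧
      ∀ I : Submodule K A, (∀ x ∈ I, ∀ a : A, a * x ∈ I ∧ x * a ∈ I) → I = ⊥ ∨ I = ⊤ := by
  obtain ⟨l, hne, hchain, hmem⟩ := hcycle
  obtain rfl : edge = EvolutionEdge b := funext₂ fun i j => propext (hedge i j)
  have : Nonempty ι := ⟨l.getLast hne⟩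
  have hsimple := simple_of_closed_path_visiting_all_general hnat
    (span_range_eq_top_of_isUnit_toMatrix b hperf)
    fun i j => reflTransGen_of_isChain_cons_getLast hne hchain (hmem i) (hmem j)
  exact ⟨hsimple.1, fun I hI => hsimple.2 I fun x hx a => (hI x hx a).1⟩
end

section
/- Let A be a two-dimensional simple evolution algebra over a field K. Then A has a natural basis {e₁, e₂} relative to which the structure matrix is one of the following three forms: (1) rows (0, λ) and (1, 0) with λ ∈ K^×; (2) rows (1, λ) and (1, 0) with λ ∈ K^×; (3) rows (1, λ) and (μ, 1) with λ, μ ∈ K^× and λμ ≠ 1. -/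
/-!
In a simple evolution algebra with natural basis `b`, the squares `b i * b i` span an ideal, which
is everything, so the structure matrix is invertible; and a set of indices closed under taking
squares spans an ideal, so no proper nonempty set is closed. In dimension two the second fact says
that both off-diagonal entries are nonzero. Rescaling `b i` by `u i` multiplies the `(j, i)` entry
by `(u j)⁻¹ * u i ^ 2`, which is enough to normalise the matrix: two nonzero diagonal entries are
scaled to `1`, and otherwise, after a swap, the lower right entry is zero and the lower left one
is scaled to `1`, with one degree of freedom left for the upper left entry. The new basis is natural
too, so the conditions on the parameters are again the two facts above.
-/

section Definitions

variable {ι K A : Type*}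

/-- A natural basis of an evolution algebra: products of distinct basis vectors vanish. -/
def IsNaturalBasis [Semiring K] [NonUnitalNonAssocSemiring A] [Module K A]
    (b : Module.Basis ι K A) : Prop :=
  ∀ i j, i ≠ j → b i * b j = 0

/-- The structure matrix of an evolution algebra relative to `b`, whose `i`-th column holds the
coordinates of `b i * b i`. -/
noncomputable def structureMatrix [CommSemiring K] [NonUnitalNonAssocSemiring A] [Module K A]
    (b : Module.Basis ι K A) : Matrix ι ι K :=
  b.toMatrix fun i => b i * b i

/-- Two-sided ideals of a nonassociative algebra, as a property of linear subspaces. -/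
def IsAlgebraIdeal [Semiring K] [NonUnitalNonAssocSemiring A] [Module K A]
    (I : Submodule K A) : Prop :=
  ∀ x ∈ I, ∀ a : A, a * x ∈ I ∧ x * a ∈ I

/-- Simple nonassociative algebras: the multiplication is nonzero and there are no ideals other
than `⊥` and `⊤`. -/
def IsSimpleAlgebra (K A : Type*) [Semiring K] [NonUnitalNonAssocSemiring A] [Module K A] : Prop :=
  (∃ x y : A, x * y ≠ 0) ∧ ∀ I : Submodule K A, IsAlgebraIdeal I → I = ⊥ ∨ I = ⊤

end Definitions

section StructureMatrix

variable {ι K A : Type*} [CommSemiring K] [NonUnitalNonAssocSemiring A] [Module K A]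

theorem structureMatrix_apply (b : Module.Basis ι K A) (i j : ι) :
    structureMatrix b j i = b.repr (b i * b i) j :=
  rfl

theorem mul_self_eq_sum_structureMatrix [Fintype ι] (b : Module.Basis ι K A) (i : ι) :
    b i * b i = ∑ j, structureMatrix b j i • b j :=
  (b.sum_repr _).symm

theorem mul_self_of_structureMatrix_eq_fin_two {e : Module.Basis (Fin 2) K A} {p q r s : K}
    (he : structureMatrix e = !![p, q; r, s]) :
    e 0 * e 0 = p • e 0 + r • e 1 ∧ e 1 * e 1 = q • e 0 + s • e 1 := by
  constructor <;> rw [mul_self_eq_sum_structureMatrix, Fin.sum_univ_two, he] <;> rfl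

theorem structureMatrix_reindex {κ : Type*} (b : Module.Basis ι K A) (σ : ι ≃ κ) :
    structureMatrix (b.reindex σ) = (structureMatrix b).reindex σ σ := by
  ext j i
  simp [structureMatrix_apply]

theorem IsNaturalBasis.reindex {κ : Type*} {b : Module.Basis ι K A} (hb : IsNaturalBasis b)
    (σ : ι ≃ κ) : IsNaturalBasis (b.reindex σ) := by
  intro i j hij
  simpa only [b.reindex_apply] using hb _ _ (σ.symm.injective.ne hij)

theorem IsNaturalBasis.exists_structureMatrix_diag_eq_zero {b : Module.Basis ι K A}
    (hb : IsNaturalBasis b) {i : ι} (hi : structureMatrix b i i = 0) (j : ι) :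
    ∃ e : Module.Basis ι K A, IsNaturalBasis e ∧ structureMatrix e j j = 0 := by
  classical
  refine ⟨b.reindex (Equiv.swap i j), hb.reindex _, ?_⟩
  simpa [structureMatrix_reindex] using hi

variable [SMulCommClass K A A]

theorem IsNaturalBasis.basis_mul {b : Module.Basis ι K A} (hb : IsNaturalBasis b) (i : ι) (y : A) :
    b i * y = b.repr y i • (b i * b i) := by
  suffices LinearMap.mulLeft K (b i) = (b.coord i).smulRight (b i * b i) from
    LinearMap.congr_fun this y
  refine b.ext fun j => ?_
  obtain rfl | hij := eq_or_ne i j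
  · simp
  · simp [hb i j hij, hij.symm]

variable [IsScalarTower K A A]

theorem IsNaturalBasis.mul_eq_sum {b : Module.Basis ι K A} (hb : IsNaturalBasis b) (x y : A) :
    x * y = (b.repr x).sum fun i r => (r * b.repr y i) • (b i * b i) := by
  conv_lhs => rw [← b.linearCombination_repr x, Finsupp.linearCombination_apply, Finsupp.sum_mul]
  simp only [smul_mul_assoc, hb.basis_mul _ y, smul_smul]

theorem IsNaturalBasis.repr_mul {b : Module.Basis ι K A} (hb : IsNaturalBasis b) (x y : A) (j : ι) :
    b.repr (x * y) j = (b.repr x).sum fun i r => r * b.repr y i * structureMatrix b j i := by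
  simp [hb.mul_eq_sum x y, structureMatrix_apply, Finsupp.sum]

theorem IsNaturalBasis.mul_mem_span_range_mul_self {b : Module.Basis ι K A}
    (hb : IsNaturalBasis b) (x y : A) :
    x * y ∈ Submodule.span K (Set.range fun i => b i * b i) := by
  rw [hb.mul_eq_sum]
  exact Submodule.sum_smul_mem _ _ fun i _ => Submodule.subset_span (Set.mem_range_self i)

theorem IsNaturalBasis.isAlgebraIdeal_span_image {b : Module.Basis ι K A}
    (hb : IsNaturalBasis b) {s : Set ι} (hs : ∀ i ∈ s, ∀ j ∉ s, structureMatrix b j i = 0) :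
    IsAlgebraIdeal (Submodule.span K (b '' s)) := by
  have mem_iff (x : A) : x ∈ Submodule.span K (b '' s) ↔ ∀ j ∉ s, b.repr x j = 0 := by
    rw [b.mem_span_image, Set.subset_def]
    simp [not_imp_comm]
  simp only [IsAlgebraIdeal, mem_iff]
  intro x hx a
  have term_eq_zero (i j : ι) (hj : j ∉ s) : b.repr x i * structureMatrix b j i = 0 := by
    by_cases hi : i ∈ s
    · rw [hs i hi j hj, mul_zero]
    · rw [hx i hi, zero_mul]
  constructor <;> intro j hj <;> rw [hb.repr_mul]
  · exact Finset.sum_eq_zero fun i _ => by simp only [mul_assoc, term_eq_zero i j hj, mul_zero]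
  · exact Finset.sum_eq_zero fun i _ => by
      simp only [mul_right_comm _ (b.repr a i), term_eq_zero i j hj, zero_mul]

theorem structureMatrix_unitsSMul (b : Module.Basis ι K A) (u : ι → Kˣ) (i j : ι) :
    structureMatrix (b.unitsSMul u) j i = ↑(u j)⁻¹ * (u i : K) ^ 2 * structureMatrix b j i := by
  simp only [structureMatrix_apply, b.repr_unitsSMul, b.unitsSMul_apply, Units.smul_def,
    smul_mul_smul_comm, map_smul, Finsupp.smul_apply, smul_eq_mul]
  ring

theorem IsNaturalBasis.unitsSMul {b : Module.Basis ι K A} (hb : IsNaturalBasis b) (u : ι → Kˣ) :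
    IsNaturalBasis (b.unitsSMul u) := by
  intro i j hij
  simp only [b.unitsSMul_apply, Units.smul_def, smul_mul_smul_comm, hb i j hij, smul_zero]

end StructureMatrix

section Simple

variable {ι K A : Type*} [CommRing K] [NonUnitalNonAssocRing A] [Module K A]
  [SMulCommClass K A A] [IsScalarTower K A A]

theorem IsSimpleAlgebra.span_range_mul_self_eq_top (hA : IsSimpleAlgebra K A)
    {b : Module.Basis ι K A} (hb : IsNaturalBasis b) :
    Submodule.span K (Set.range fun i => b i * b i) = ⊤ := by
  obtain ⟨⟨x, y, hxy⟩, hideal⟩ := hA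
  have hmul := hb.mul_mem_span_range_mul_self
  refine (hideal _ fun x _ a => ⟨hmul a x, hmul x a⟩).resolve_left fun hbot => hxy ?_
  simpa only [hbot, Submodule.mem_bot] using hmul x y

variable [Nontrivial K]

theorem IsSimpleAlgebra.isUnit_det_structureMatrix [Fintype ι] [DecidableEq ι]
    (hA : IsSimpleAlgebra K A) {b : Module.Basis ι K A} (hb : IsNaturalBasis b) :
    IsUnit (structureMatrix b).det := by
  have hspan := hA.span_range_mul_self_eq_top hb
  have hindep : LinearIndependent K fun i => b i * b i :=
    linearIndependent_of_top_le_span_of_card_eq_finrank hspan.ge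
      (Module.finrank_eq_card_basis b).symm
  exact b.is_basis_iff_det.1 ⟨hindep, hspan⟩

theorem IsSimpleAlgebra.exists_structureMatrix_ne_zero (hA : IsSimpleAlgebra K A)
    {b : Module.Basis ι K A} (hb : IsNaturalBasis b) {s : Set ι} (hs : s.Nonempty)
    (hs' : s ≠ Set.univ) : ∃ i ∈ s, ∃ j ∉ s, structureMatrix b j i ≠ 0 := by
  by_contra! hclosed
  rcases hA.2 _ (hb.isAlgebraIdeal_span_image hclosed) with hbot | htop
  · obtain ⟨i, hi⟩ := hs
    refine b.ne_zero i ((Submodule.mem_bot K).1 ?_)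
    exact hbot ▸ b.self_mem_span_image.2 hi
  · refine hs' (Set.eq_univ_of_forall fun i => b.self_mem_span_image.1 ?_)
    exact htop ▸ Submodule.mem_top

theorem IsSimpleAlgebra.structureMatrix_ne_zero_of_ne (hA : IsSimpleAlgebra K A)
    {b : Module.Basis (Fin 2) K A} (hb : IsNaturalBasis b) {i j : Fin 2} (hij : i ≠ j) :
    structureMatrix b j i ≠ 0 := by
  have hproper : ({i} : Set (Fin 2)) ≠ Set.univ := fun h => hij.symm (h.ge (Set.mem_univ j))
  obtain ⟨_, rfl, k, hk, hne⟩ :=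
    hA.exists_structureMatrix_ne_zero hb (Set.singleton_nonempty i) hproper
  obtain rfl : k = j := by
    rw [Set.mem_singleton_iff] at hk
    omega
  exact hne

end Simple

section NormalForms

variable {ι K A : Type*} [Field K] [NonUnitalNonAssocSemiring A] [Module K A]
  [SMulCommClass K A A] [IsScalarTower K A A]

theorem IsNaturalBasis.exists_structureMatrix_diag_eq_one {b : Module.Basis ι K A}
    (hb : IsNaturalBasis b) (hdiag : ∀ i, structureMatrix b i i ≠ 0) :
    ∃ e : Module.Basis ι K A, IsNaturalBasis e ∧ ∀ i, structureMatrix e i i = 1 := by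
  refine ⟨_, hb.unitsSMul fun i => (Units.mk0 _ (hdiag i))⁻¹, fun i => ?_⟩
  simp only [structureMatrix_unitsSMul, inv_inv, Units.val_inv_eq_inv_val, Units.val_mk0]
  field_simp [hdiag i]

theorem IsNaturalBasis.exists_structureMatrix_eq_of_one_one_eq_zero
    {b : Module.Basis (Fin 2) K A} (hb : IsNaturalBasis b) (h₁₁ : structureMatrix b 1 1 = 0)
    (h₁₀ : structureMatrix b 1 0 ≠ 0) {t : K} (ht : t ≠ 0) :
    ∃ e : Module.Basis (Fin 2) K A, IsNaturalBasis e ∧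
      ∃ lam, structureMatrix e = !![t * structureMatrix b 0 0, lam; 1, 0] := by
  let u : Fin 2 → Kˣ := ![Units.mk0 t ht, Units.mk0 (t ^ 2 * structureMatrix b 1 0) (by positivity)]
  have entry₀₀ : structureMatrix (b.unitsSMul u) 0 0 = t * structureMatrix b 0 0 := by
    simp [structureMatrix_unitsSMul, u, sq, ht]
  have entry₁₀ : structureMatrix (b.unitsSMul u) 1 0 = 1 := by
    have hunit : t ^ 2 * structureMatrix b 1 0 ≠ 0 := (u 1).ne_zero
    simpa [structureMatrix_unitsSMul, u, mul_assoc] using inv_mul_cancel₀ hunit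
  have entry₁₁ : structureMatrix (b.unitsSMul u) 1 1 = 0 := by
    rw [structureMatrix_unitsSMul, h₁₁, mul_zero]
  refine ⟨b.unitsSMul u, hb.unitsSMul u, structureMatrix (b.unitsSMul u) 0 1, ?_⟩
  conv_lhs => rw [Matrix.eta_fin_two (structureMatrix (b.unitsSMul u)), entry₀₀, entry₁₀, entry₁₁]

end NormalForms

section SimpleNormalForms

variable {K A : Type*} [Field K] [NonUnitalNonAssocRing A] [Module K A]
  [SMulCommClass K A A] [IsScalarTower K A A]

theorem IsSimpleAlgebra.exists_structureMatrix_eq_of_diag_ne_zero (hA : IsSimpleAlgebra K A)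
    {b : Module.Basis (Fin 2) K A} (hb : IsNaturalBasis b)
    (hdiag : ∀ i, structureMatrix b i i ≠ 0) :
    ∃ e : Module.Basis (Fin 2) K A, IsNaturalBasis e ∧ ∃ lam mu : K,
      lam ≠ 0 ∧ mu ≠ 0 ∧ lam * mu ≠ 1 ∧ structureMatrix e = !![1, lam; mu, 1] := by
  obtain ⟨e, he, hone⟩ := hb.exists_structureMatrix_diag_eq_one hdiag
  have hdet := (hA.isUnit_det_structureMatrix he).ne_zero
  rw [Matrix.det_fin_two, hone, hone, one_mul, sub_ne_zero] at hdet
  refine ⟨e, he, structureMatrix e 0 1, structureMatrix e 1 0,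
    hA.structureMatrix_ne_zero_of_ne he one_ne_zero,
    hA.structureMatrix_ne_zero_of_ne he zero_ne_one, hdet.symm, ?_⟩
  conv_lhs => rw [Matrix.eta_fin_two (structureMatrix e), hone, hone]

theorem IsSimpleAlgebra.exists_structureMatrix_eq_of_one_one_eq_zero (hA : IsSimpleAlgebra K A)
    {b : Module.Basis (Fin 2) K A} (hb : IsNaturalBasis b) (h₁₁ : structureMatrix b 1 1 = 0)
    {t : K} (ht : t ≠ 0) :
    ∃ e : Module.Basis (Fin 2) K A, IsNaturalBasis e ∧ ∃ lam : K,
      lam ≠ 0 ∧ structureMatrix e = !![t * structureMatrix b 0 0, lam; 1, 0] := by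
  have h₁₀ := hA.structureMatrix_ne_zero_of_ne hb zero_ne_one
  obtain ⟨e, he, lam, hM⟩ := hb.exists_structureMatrix_eq_of_one_one_eq_zero h₁₁ h₁₀ ht
  have hlam : lam ≠ 0 := by simpa [hM] using hA.structureMatrix_ne_zero_of_ne he one_ne_zero
  exact ⟨e, he, lam, hlam, hM⟩

end SimpleNormalForms

/-- Let `A` be a two-dimensional simple evolution algebra over a field `K`
(it has a natural basis indexed by `Fin 2`).  Then `A` has a natural basis `{e₁, e₂}` relative
to which the structure matrix is one of: rows `(0, λ), (1, 0)`; rows `(1, λ), (1, 0)`;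
rows `(1, λ), (μ, 1)` with `λ, μ ∈ K^×` and `λμ ≠ 1` (the `i`-th column of the structure
matrix holds the coordinates of `e_i²`). -/
theorem two_dim_simple_classification {K A : Type*} [Field K]
    [NonUnitalNonAssocCommRing A] [Module K A] [SMulCommClass K A A] [IsScalarTower K A A]
    (hB : ∃ b : Module.Basis (Fin 2) K A, ∀ i j : Fin 2, i ≠ j → b i * b j = 0)
    (hsimple : (∃ x y : A, x * y ≠ 0) ∧
      ∀ I : Submodule K A, (∀ x ∈ I, ∀ a : A, a * x ∈ I ∧ x * a ∈ I) → I = ⊥ ∨ I = ⊤) :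
    ∃ e : Module.Basis (Fin 2) K A, (∀ i j : Fin 2, i ≠ j → e i * e j = 0) ∧
      ((∃ lam : K, lam ≠ 0 ∧ e 0 * e 0 = e 1 ∧ e 1 * e 1 = lam • e 0) ∨
       (∃ lam : K, lam ≠ 0 ∧ e 0 * e 0 = e 0 + e 1 ∧ e 1 * e 1 = lam • e 0) ∨
       (∃ lam mu : K, lam ≠ 0 ∧ mu ≠ 0 ∧ lam * mu ≠ 1 ∧
          e 0 * e 0 = e 0 + mu • e 1 ∧ e 1 * e 1 = lam • e 0 + e 1)) := by
  obtain ⟨b, hb : IsNaturalBasis b⟩ := hB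
  have hA : IsSimpleAlgebra K A := hsimple
  by_cases hdiag : ∀ i, structureMatrix b i i ≠ 0
  · obtain ⟨e, he, lam, mu, hlam, hmu, hlam_mu, hM⟩ :=
      hA.exists_structureMatrix_eq_of_diag_ne_zero hb hdiag
    have hsq := mul_self_of_structureMatrix_eq_fin_two hM
    exact ⟨e, he, .inr (.inr ⟨lam, mu, hlam, hmu, hlam_mu, by simpa using hsq⟩)⟩
  · obtain ⟨i, hi⟩ := not_forall_not.1 hdiag
    obtain ⟨c, hc, h₁₁⟩ := hb.exists_structureMatrix_diag_eq_zero hi 1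
    by_cases h₀₀ : structureMatrix c 0 0 = 0
    · obtain ⟨e, he, lam, hlam, hM⟩ :=
        hA.exists_structureMatrix_eq_of_one_one_eq_zero hc h₁₁ one_ne_zero
      have hsq := mul_self_of_structureMatrix_eq_fin_two hM
      exact ⟨e, he, .inl ⟨lam, hlam, by simpa [h₀₀] using hsq⟩⟩
    · obtain ⟨e, he, lam, hlam, hM⟩ :=
        hA.exists_structureMatrix_eq_of_one_one_eq_zero hc h₁₁ (inv_ne_zero h₀₀)
      have hsq := mul_self_of_structureMatrix_eq_fin_two hM
      exact ⟨e, he, .inr (.inl ⟨lam, hlam, by simpa [h₀₀] using hsq⟩)⟩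
end

section
/- For λ ∈ K^×, let II⁰²_λ be the evolution algebra on K² with natural basis {e₁, e₂} and products e₁² = e₂, e₂² = λe₁, e₁e₂ = e₂e₁ = 0. Then for λ, μ ∈ K^×, the algebras II⁰²_λ and II⁰²_μ are isomorphic as K-algebras if and only if there exist k ∈ K^× and natural numbers r, s with μ^(2^r) = k³ λ^(2^s). -/
/-!
Fix an algebra with a basis `f` having the multiplication table of `II⁰²_μ`. Rescaling to
`(a f₁, a² f₂)` gives the table of `II⁰²_{a³μ}`, and swapping to `(μ⁻¹ f₂, μ⁻¹ f₁)` gives that of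
`II⁰²_{μ⁻¹}`. Conversely, if `p f₁ + q f₂` is the first vector of a basis with the table of
`II⁰²_λ`, then comparing coordinates gives `λ p = p⁴ μ` and `λ q = q⁴ μ²`. So `II⁰²_λ ≅ II⁰²_μ` iff
`λ ≡ μ^{±1}` modulo cubes. Since squaring is inversion in the group `K^× / (K^×)³` of exponent `3`,
the powers `μ^(2^r)` run exactly through the classes of `μ` and `μ⁻¹`.
-/

section ExponentThree

variable {G : Type*} [Group G] {x y : G}

theorem sq_eq_inv_of_pow_three_eq_one (hx : x ^ 3 = 1) : x ^ 2 = x⁻¹ :=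
  eq_inv_of_mul_eq_one_left (by rw [← pow_succ, hx])

theorem pow_two_pow_eq_self_or_inv (hx : x ^ 3 = 1) (n : ℕ) :
    x ^ 2 ^ n = x ∨ x ^ 2 ^ n = x⁻¹ := by
  induction n with
  | zero => simp
  | succ n ih =>
    rw [pow_succ, pow_mul]
    rcases ih with h | h
    · right
      rw [h, sq_eq_inv_of_pow_three_eq_one hx]
    · left
      rw [h, inv_pow, sq_eq_inv_of_pow_three_eq_one hx, inv_inv]

theorem exists_pow_two_pow_eq_iff (hx : x ^ 3 = 1) (hy : y ^ 3 = 1) :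
    (∃ r s : ℕ, y ^ 2 ^ r = x ^ 2 ^ s) ↔ x = y ∨ x = y⁻¹ := by
  constructor
  · rintro ⟨r, s, h⟩
    rcases pow_two_pow_eq_self_or_inv hy r with hr | hr <;>
      rcases pow_two_pow_eq_self_or_inv hx s with hs | hs <;>
      rw [hr, hs] at h
    · exact .inl h.symm
    · exact .inr (inv_eq_iff_eq_inv.mp h.symm)
    · exact .inr h.symm
    · exact .inl (inv_inj.mp h).symm
  · rintro (rfl | rfl)
    · exact ⟨0, 0, rfl⟩
    · exact ⟨1, 0, by simpa using sq_eq_inv_of_pow_three_eq_one hy⟩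

end ExponentThree

/-- The quotient of a commutative group by its subgroup of cubes; for `G = K^×` it classifies the
parameters of the algebras `II⁰²` up to rescaling of the natural basis. -/
abbrev CubeClass (G : Type*) [CommGroup G] : Type _ :=
  G ⧸ (powMonoidHom 3 : G →* G).range

namespace CubeClass

variable {G : Type*} [CommGroup G]

theorem mk_eq_mk_iff {x y : G} : (x : CubeClass G) = y ↔ ∃ k : G, x = k ^ 3 * y := by
  simp only [eq_comm (a := (x : CubeClass G)), QuotientGroup.eq, MonoidHom.mem_range,
    powMonoidHom_apply, eq_inv_mul_iff_mul_eq, mul_comm y, eq_comm (b := x)]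

theorem pow_three_eq_one (c : CubeClass G) : c ^ 3 = 1 := by
  induction c using QuotientGroup.induction_on with
  | H x => exact (QuotientGroup.eq_one_iff _).mpr ⟨x, rfl⟩

theorem exists_pow_two_pow_eq_cube_mul_iff {x y : G} :
    (∃ (k : G) (r s : ℕ), y ^ 2 ^ r = k ^ 3 * x ^ 2 ^ s) ↔
      (x : CubeClass G) = y ∨ (x : CubeClass G) = (y⁻¹ : G) := by
  rw [QuotientGroup.mk_inv,
    ← exists_pow_two_pow_eq_iff (pow_three_eq_one _) (pow_three_eq_one _)]
  simp only [← QuotientGroup.mk_pow, mk_eq_mk_iff]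
  exact ⟨fun ⟨k, r, s, h⟩ ↦ ⟨r, s, k, h⟩, fun ⟨r, s, k, h⟩ ↦ ⟨k, r, s, h⟩⟩

end CubeClass

theorem map_mul_of_basis {R A B ι : Type*} [CommSemiring R]
    [NonUnitalNonAssocSemiring A] [Module R A] [SMulCommClass R A A] [IsScalarTower R A A]
    [NonUnitalNonAssocSemiring B] [Module R B] [SMulCommClass R B B] [IsScalarTower R B B]
    (e : Module.Basis ι R A) (φ : A →ₗ[R] B)
    (h : ∀ i j, φ (e i * e j) = φ (e i) * φ (e j)) (x y : A) : φ (x * y) = φ x * φ y :=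
  LinearMap.congr_fun₂ (f := (LinearMap.mul R A).compr₂ φ)
    (g := (LinearMap.mul R B).compl₁₂ φ φ) (LinearMap.ext_basis e e h) x y

/-- The basis `(e 0, e 1)` is natural and has the multiplication table
`e₁² = e₂`, `e₂² = c e₁` of the evolution algebra `II⁰²_c`, with `e₁ = e 0` and `e₂ = e 1`. An
algebra is isomorphic to `II⁰²_c` exactly when it has such a basis. -/
structure IsII02Basis {R A : Type*} [CommSemiring R] [NonUnitalNonAssocSemiring A] [Module R A]
    (e : Module.Basis (Fin 2) R A) (c : R) : Prop where
  mul_of_ne : ∀ i j : Fin 2, i ≠ j → e i * e j = 0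
  sq_zero : e 0 * e 0 = e 1
  sq_one : e 1 * e 1 = c • e 0

namespace IsII02Basis

section Transport

variable {R A B : Type*} [CommSemiring R]
  [NonUnitalNonAssocSemiring A] [Module R A] [NonUnitalNonAssocSemiring B] [Module R B]
  {e : Module.Basis (Fin 2) R A} {f : Module.Basis (Fin 2) R B} {c : R}

theorem map (he : IsII02Basis e c) (φ : A ≃ₗ[R] B) (hφ : ∀ x y, φ (x * y) = φ x * φ y) :
    IsII02Basis (e.map φ) c where
  mul_of_ne i j hij := by
    rw [Module.Basis.map_apply, Module.Basis.map_apply, ← hφ, he.mul_of_ne i j hij, map_zero]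
  sq_zero := by rw [Module.Basis.map_apply, Module.Basis.map_apply, ← hφ, he.sq_zero]
  sq_one := by
    rw [Module.Basis.map_apply, Module.Basis.map_apply, ← hφ, he.sq_one, map_smul]

variable [SMulCommClass R A A] [IsScalarTower R A A] [SMulCommClass R B B] [IsScalarTower R B B]

theorem equiv_map_mul (he : IsII02Basis e c) (hf : IsII02Basis f c) (x y : A) :
    e.equiv f (Equiv.refl _) (x * y) =
      e.equiv f (Equiv.refl _) x * e.equiv f (Equiv.refl _) y := by
  refine map_mul_of_basis e (e.equiv f (Equiv.refl _)).toLinearMap (fun i j ↦ ?_) x y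
  by_cases hij : i = j
  · subst hij
    fin_cases i <;> simp [he.sq_zero, he.sq_one, hf.sq_zero, hf.sq_one]
  · simp [he.mul_of_ne i j hij, hf.mul_of_ne i j hij]

theorem exists_linearEquiv_map_mul_iff (he : IsII02Basis e c) :
    (∃ φ : A ≃ₗ[R] B, ∀ x y, φ (x * y) = φ x * φ y) ↔
      ∃ g : Module.Basis (Fin 2) R B, IsII02Basis g c :=
  ⟨fun ⟨φ, hφ⟩ ↦ ⟨e.map φ, he.map φ hφ⟩,
    fun ⟨g, hg⟩ ↦ ⟨e.equiv g (Equiv.refl _), he.equiv_map_mul hg⟩⟩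

end Transport

section ChangeOfBasis

variable {R A : Type*} [CommSemiring R]
  [NonUnitalNonAssocSemiring A] [Module R A] [SMulCommClass R A A] [IsScalarTower R A A]
  {f : Module.Basis (Fin 2) R A}

theorem rescale {c : R} (hf : IsII02Basis f c) (a : Rˣ) :
    IsII02Basis (f.unitsSMul ![a, a ^ 2]) (a ^ 3 * c) where
  mul_of_ne i j hij := by
    simp [Module.Basis.unitsSMul_apply, Units.smul_def, smul_mul_assoc, mul_smul_comm,
      hf.mul_of_ne i j hij]
  sq_zero := by
    simp [Module.Basis.unitsSMul_apply, Units.smul_def, smul_mul_assoc, mul_smul_comm,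
      hf.sq_zero, smul_smul, pow_two]
  sq_one := by
    simp only [Module.Basis.unitsSMul_apply, Matrix.cons_val_zero, Matrix.cons_val_one,
      Units.smul_def, Units.val_pow_eq_pow_val, smul_mul_assoc, mul_smul_comm, hf.sq_one]
    module

theorem swap {c : Rˣ} (hf : IsII02Basis f (c : R)) :
    IsII02Basis ((f.reindex (Equiv.swap 0 1)).unitsSMul fun _ ↦ c⁻¹) (c⁻¹ : Rˣ) where
  mul_of_ne i j hij := by
    have hswap := hf.mul_of_ne _ _ ((Equiv.swap (0 : Fin 2) 1).injective.ne hij)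
    simp [Module.Basis.unitsSMul_apply, Units.smul_def, smul_mul_assoc, mul_smul_comm, hswap]
  sq_zero := by
    simp [Module.Basis.unitsSMul_apply, Units.smul_def, smul_mul_assoc, mul_smul_comm,
      hf.sq_one, smul_smul]
  sq_one := by
    simp [Module.Basis.unitsSMul_apply, Units.smul_def, smul_mul_assoc, mul_smul_comm,
      hf.sq_zero]

theorem smul_add_smul_mul_smul_add_smul {c : R} (hf : IsII02Basis f c) (p q p' q' : R) :
    (p • f 0 + q • f 1) * (p' • f 0 + q' • f 1) = (q * q' * c) • f 0 + (p * p') • f 1 := by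
  simp only [mul_add, add_mul, smul_mul_assoc, mul_smul_comm, hf.sq_zero, hf.sq_one,
    hf.mul_of_ne 0 1 zero_ne_one, hf.mul_of_ne 1 0 one_ne_zero]
  module

theorem mul_coord_eq {g : Module.Basis (Fin 2) R A} {c d : R} (hf : IsII02Basis f c)
    (hg : IsII02Basis g d) {p q : R} (hpq : g 0 = p • f 0 + q • f 1) :
    d * p = p ^ 4 * c ∧ d * q = q ^ 4 * c ^ 2 := by
  have hg1 : g 1 = (q * q * c) • f 0 + (p * p) • f 1 := by
    rw [← hg.sq_zero, hpq, hf.smul_add_smul_mul_smul_add_smul]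
  have hsq := hg.sq_one
  rw [hpq, hg1, hf.smul_add_smul_mul_smul_add_smul] at hsq
  have hrepr := congrArg f.repr hsq
  have h0 : p * p * (p * p) * c = d * p := by simpa using DFunLike.congr_fun hrepr 0
  have h1 : q * q * c * (q * q * c) = d * q := by simpa using DFunLike.congr_fun hrepr 1
  exact ⟨by rw [← h0]; ring, by rw [← h1]; ring⟩

end ChangeOfBasis

section Classification

variable {K A : Type*} [Field K]
  [NonUnitalNonAssocSemiring A] [Module K A] [SMulCommClass K A A] [IsScalarTower K A A]
  {f g : Module.Basis (Fin 2) K A} {lam mu : Kˣ}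

theorem cubeClass_eq_or_eq_inv (hf : IsII02Basis f (mu : K)) (hg : IsII02Basis g (lam : K)) :
    (lam : CubeClass Kˣ) = mu ∨ (lam : CubeClass Kˣ) = (mu⁻¹ : Kˣ) := by
  obtain ⟨p, q, hpq⟩ : ∃ p q : K, g 0 = p • f 0 + q • f 1 :=
    ⟨f.repr (g 0) 0, f.repr (g 0) 1, by rw [← Fin.sum_univ_two fun i ↦ _ • f i, f.sum_repr]⟩
  obtain ⟨hp, hq⟩ := hf.mul_coord_eq hg hpq
  simp only [CubeClass.mk_eq_mk_iff, Units.ext_iff, Units.val_mul, Units.val_pow_eq_pow_val]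
  by_cases hp0 : p = 0
  · have hq0 : q ≠ 0 := fun hq0 ↦ g.ne_zero 0 (by simp [hpq, hp0, hq0])
    refine .inr ⟨Units.mk0 q hq0 * mu, mul_right_cancel₀ hq0 (hq.trans ?_)⟩
    simp only [Units.val_mul, Units.val_mk0, Units.val_inv_eq_inv_val]
    field_simp
  · exact .inl ⟨Units.mk0 p hp0, mul_right_cancel₀ hp0 (hp.trans (by rw [Units.val_mk0]; ring))⟩

theorem exists_basis_of_cubeClass_eq (hf : IsII02Basis f (mu : K))
    (h : (lam : CubeClass Kˣ) = mu) :
    ∃ g : Module.Basis (Fin 2) K A, IsII02Basis g (lam : K) := by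
  obtain ⟨a, rfl⟩ := CubeClass.mk_eq_mk_iff.mp h
  exact ⟨_, by simpa using hf.rescale a⟩

theorem exists_basis_iff_cubeClass_eq_or_eq_inv (hf : IsII02Basis f (mu : K)) :
    (∃ g : Module.Basis (Fin 2) K A, IsII02Basis g (lam : K)) ↔
      (lam : CubeClass Kˣ) = mu ∨ (lam : CubeClass Kˣ) = (mu⁻¹ : Kˣ) :=
  ⟨fun ⟨_, hg⟩ ↦ hf.cubeClass_eq_or_eq_inv hg,
    fun h ↦ h.elim hf.exists_basis_of_cubeClass_eq hf.swap.exists_basis_of_cubeClass_eq⟩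

end Classification

end IsII02Basis

/-- For `λ ∈ K^×`, `II⁰²_λ` is the evolution algebra with natural basis
`{e₁, e₂}` and products `e₁² = e₂`, `e₂² = λ e₁`, `e₁e₂ = e₂e₁ = 0`.  For `λ, μ ∈ K^×`,
`II⁰²_λ ≅ II⁰²_μ` as `K`-algebras iff there are `k ∈ K^×` and naturals `r, s` with
`μ^(2^r) = k³ λ^(2^s)`. -/
theorem II02_iso_iff {K A B : Type*} [Field K]
    [NonUnitalNonAssocCommRing A] [Module K A] [SMulCommClass K A A] [IsScalarTower K A A]
    [NonUnitalNonAssocCommRing B] [Module K B] [SMulCommClass K B B] [IsScalarTower K B B]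
    (lam mu : K) (hlam : lam ≠ 0) (hmu : mu ≠ 0)
    (e : Module.Basis (Fin 2) K A) (hen : ∀ i j : Fin 2, i ≠ j → e i * e j = 0)
    (he0 : e 0 * e 0 = e 1) (he1 : e 1 * e 1 = lam • e 0)
    (f : Module.Basis (Fin 2) K B) (hfn : ∀ i j : Fin 2, i ≠ j → f i * f j = 0)
    (hf0 : f 0 * f 0 = f 1) (hf1 : f 1 * f 1 = mu • f 0) :
    (∃ φ : A ≃ₗ[K] B, ∀ x y : A, φ (x * y) = φ x * φ y) ↔
      ∃ (k : K) (r s : ℕ), k ≠ 0 ∧ mu ^ 2 ^ r = k ^ 3 * lam ^ 2 ^ s := by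
  lift lam to Kˣ using IsUnit.mk0 lam hlam
  lift mu to Kˣ using IsUnit.mk0 mu hmu
  have he : IsII02Basis e (lam : K) := ⟨hen, he0, he1⟩
  have hf : IsII02Basis f (mu : K) := ⟨hfn, hf0, hf1⟩
  rw [he.exists_linearEquiv_map_mul_iff, hf.exists_basis_iff_cubeClass_eq_or_eq_inv,
    ← CubeClass.exists_pow_two_pow_eq_cube_mul_iff]
  simp only [Units.ext_iff, Units.val_mul, Units.val_pow_eq_pow_val, exists_and_left]
  exact Units.exists_iff_ne_zero (p := fun k : K ↦
    ∃ r s : ℕ, (mu : K) ^ 2 ^ r = k ^ 3 * (lam : K) ^ 2 ^ s)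
end

section
/- For λ, μ ∈ K^×, let III⁰⁴_{λ,μ} be the evolution algebra on K³ with natural basis {e₁,e₂,e₃} and products e₁² = e₂, e₂² = λe₁, e₃² = μe₁, e_i e_j = 0 for i ≠ j (structure matrix with rows (0,λ,μ),(1,0,0),(0,1,0)). Then for λ, μ, λ', μ' ∈ K^×, the algebras III⁰⁴_{λ,μ} and III⁰⁴_{λ',μ'} are isomorphic as K-algebras if and only if there exists k ∈ K^× with λ' = k³λ and μ' = k⁷μ. -/
/-!
Isomorphisms `A ≃ B` correspond to bases `w` of `B` with the multiplication table of `e`. Write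
`x`, `y`, `z` for the `f`-coordinates of `w 0`, `w 1`, `w 2`. Orthogonality of the `w i` gives
`x₁z₁ = y₀z₀ = y₁z₁ = 0` and `μ'x₂z₂ = 0`, while their squares give `y₀ = λ'x₁² + μ'x₂²`,
`λx₁ + z₁ = y₀²`, `λx₂ + z₂ = y₁²`, `μx₁ = z₀²` and `μx₂ = z₁²`. Let `λ` and `μ` be nonzero.

* If `x₁ ≠ 0`, then `z₁ = 0`, so `y₀² = λx₁ ≠ 0`, so `z₀ = 0`, contradicting `μx₁ = z₀²`.
* If `x₁ = 0` and `x₂ ≠ 0`, then `z₁ ≠ 0`, so `y₁ = 0` and `z₂ = -λx₂`; now `μ'x₂z₂ = 0` gives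
  `μ' = 0`, so `y₀ = 0`, contradicting `z₁ = y₀²`.

Hence `w 0 = x₀ • f 0`, so `w 1 = x₀² • f 1` and `w 2 = x₀⁴ • f 2`, and the remaining relations are
`λx₀ = λ'x₀⁴` and `μx₀ = μ'x₀⁸`. The parameter of the theorem is `k = x₀⁻¹`.
-/

open Module

theorem mul_unit_eq_mul_pow_succ_iff {M : Type*} [CommMonoid M] {a b : M} (x : Mˣ) (n : ℕ) :
    a * x = b * x ^ (n + 1) ↔ b = (x⁻¹ : Mˣ) ^ n * a := by
  rw [pow_succ, ← mul_assoc, Units.mul_left_inj, mul_comm _ a, ← Units.val_pow_eq_pow_val,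
    ← Units.val_pow_eq_pow_val, inv_pow, Units.eq_mul_inv_iff_mul_eq, eq_comm]

section Basis

variable {ι R A B : Type*} [CommSemiring R]
  [NonUnitalNonAssocSemiring A] [Module R A] [SMulCommClass R A A] [IsScalarTower R A A]
  [NonUnitalNonAssocSemiring B] [Module R B] [SMulCommClass R B B] [IsScalarTower R B B]

theorem isUnit_of_basis_apply_eq_smul {M : Type*} [AddCommMonoid M] [Module R M]
    (b : Basis ι R M) {i : ι} {x : R} {v : M} (h : b i = x • v) : IsUnit x := by
  refine IsUnit.of_mul_eq_one (b.repr v i) ?_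
  calc x * b.repr v i = b.repr (b i) i := by simp [h]
    _ = 1 := by simp

theorem map_mul_iff_forall_basis (b : Basis ι R A) (φ : A →ₗ[R] B) :
    (∀ x y, φ (x * y) = φ x * φ y) ↔ ∀ i j, φ (b i * b j) = φ (b i) * φ (b j) := by
  refine ⟨fun h i j => h _ _, fun h x y => ?_⟩
  have bilinear_maps_eq :
      (LinearMap.mul R A).compr₂ φ = (LinearMap.mul R B).compl₁₂ φ φ :=
    b.ext fun i => b.ext fun j => h i j
  exact LinearMap.congr_fun₂ bilinear_maps_eq x y

theorem mul_eq_sum_of_pairwise_mul_eq_zero [Fintype ι] (b : Basis ι R A)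
    (hb : Pairwise fun i j => b i * b j = 0) (x y : A) :
    x * y = ∑ i, (b.repr x i * b.repr y i) • (b i * b i) := by
  calc x * y = (∑ i, b.repr x i • b i) * ∑ j, b.repr y j • b j := by simp only [b.sum_repr]
    _ = ∑ i, ∑ j, (b.repr x i * b.repr y j) • (b i * b j) := by
      simp only [Finset.sum_mul_sum, smul_mul_smul_comm]
    _ = ∑ i, (b.repr x i * b.repr y i) • (b i * b i) :=
      Finset.sum_congr rfl fun i _ => Fintype.sum_eq_single i fun j hj => by
        rw [hb hj.symm, smul_zero]

end Basis

/-- The family `v 0, v 1, v 2` has the multiplication table of the natural basis `e₁, e₂, e₃` of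
the evolution algebra `III⁰⁴_{λ,μ}`. Linear independence is not part of the definition, so that it
also describes the image of the natural basis under an algebra homomorphism. -/
structure IsIII04Family {R A : Type*} [NonUnitalNonAssocSemiring A] [SMul R A] (lam mu : R)
    (v : Fin 3 → A) : Prop where
  mul_eq_zero_of_ne : ∀ i j : Fin 3, i ≠ j → v i * v j = 0
  apply_zero_mul_self : v 0 * v 0 = v 1
  apply_one_mul_self : v 1 * v 1 = lam • v 0 + v 2
  apply_two_mul_self : v 2 * v 2 = mu • v 0

namespace IsIII04Family

variable {R A B : Type*} [CommSemiring R]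
  [NonUnitalNonAssocSemiring A] [Module R A] [SMulCommClass R A A] [IsScalarTower R A A]
  [NonUnitalNonAssocSemiring B] [Module R B] [SMulCommClass R B B] [IsScalarTower R B B]
  {lam mu lam' mu' : R}

section Isomorphism

variable {e : Basis (Fin 3) R A}

theorem map_mul_iff (he : IsIII04Family lam mu e) (φ : A →ₗ[R] B) :
    (∀ x y, φ (x * y) = φ x * φ y) ↔ IsIII04Family lam mu (φ ∘ e) := by
  constructor
  · intro hφ
    constructor <;> simp only [Function.comp_apply, ← hφ, ← map_smul, ← map_add]
    · exact fun i j hij => by rw [he.mul_eq_zero_of_ne i j hij, map_zero]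
    · rw [he.apply_zero_mul_self]
    · rw [he.apply_one_mul_self]
    · rw [he.apply_two_mul_self]
  · intro hφe
    refine (map_mul_iff_forall_basis e φ).2 fun i j => ?_
    obtain rfl | hij := eq_or_ne i j
    · fin_cases i
      · simpa [he.apply_zero_mul_self] using hφe.apply_zero_mul_self.symm
      · simpa [he.apply_one_mul_self] using hφe.apply_one_mul_self.symm
      · simpa [he.apply_two_mul_self] using hφe.apply_two_mul_self.symm
    · rw [he.mul_eq_zero_of_ne i j hij, map_zero]
      exact (hφe.mul_eq_zero_of_ne i j hij).symm

theorem exists_linearEquiv_map_mul_iff (he : IsIII04Family lam mu e) :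
    (∃ φ : A ≃ₗ[R] B, ∀ x y, φ (x * y) = φ x * φ y) ↔
      ∃ w : Basis (Fin 3) R B, IsIII04Family lam mu w := by
  constructor
  · rintro ⟨φ, hφ⟩
    exact ⟨e.map φ, by simpa [Basis.coe_map] using (he.map_mul_iff φ.toLinearMap).1 hφ⟩
  · rintro ⟨w, hw⟩
    let φ : A ≃ₗ[R] B := e.equiv w (Equiv.refl _)
    have hφe : φ ∘ e = w := funext fun i => e.equiv_apply i w (Equiv.refl _)
    exact ⟨φ, (he.map_mul_iff φ.toLinearMap).2 (by simpa [hφe] using hw)⟩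

end Isomorphism

theorem pow_smul {v : Fin 3 → B} (hv : IsIII04Family lam' mu' v) {x : R}
    (hlam : lam * x = lam' * x ^ 4) (hmu : mu * x = mu' * x ^ 8) :
    IsIII04Family lam mu fun i => x ^ 2 ^ (i : ℕ) • v i where
  mul_eq_zero_of_ne i j hij := by
    rw [smul_mul_smul_comm, hv.mul_eq_zero_of_ne i j hij, smul_zero]
  apply_zero_mul_self := by
    rw [smul_mul_smul_comm, hv.apply_zero_mul_self]
    simp [pow_two]
  apply_one_mul_self := by
    rw [smul_mul_smul_comm, hv.apply_one_mul_self, smul_add, smul_smul, smul_smul]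
    simp [hlam, ← pow_add, mul_comm]
  apply_two_mul_self := by
    rw [smul_mul_smul_comm, hv.apply_two_mul_self, smul_smul, smul_smul]
    simp [hmu, ← pow_add, mul_comm]

section Coordinates

variable {f : Basis (Fin 3) R B}

theorem mul_eq (hf : IsIII04Family lam' mu' f) (u v : B) :
    u * v = (lam' * (f.repr u 1 * f.repr v 1) + mu' * (f.repr u 2 * f.repr v 2)) • f 0 +
      (f.repr u 0 * f.repr v 0) • f 1 + (f.repr u 1 * f.repr v 1) • f 2 := by
  rw [mul_eq_sum_of_pairwise_mul_eq_zero f hf.mul_eq_zero_of_ne, Fin.sum_univ_three,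
    hf.apply_zero_mul_self, hf.apply_one_mul_self, hf.apply_two_mul_self]
  module

theorem repr_mul_zero (hf : IsIII04Family lam' mu' f) (u v : B) :
    f.repr (u * v) 0 = lam' * (f.repr u 1 * f.repr v 1) + mu' * (f.repr u 2 * f.repr v 2) := by
  simp [hf.mul_eq u v]

theorem repr_mul_one (hf : IsIII04Family lam' mu' f) (u v : B) :
    f.repr (u * v) 1 = f.repr u 0 * f.repr v 0 := by
  simp [hf.mul_eq u v]

theorem repr_mul_two (hf : IsIII04Family lam' mu' f) (u v : B) :
    f.repr (u * v) 2 = f.repr u 1 * f.repr v 1 := by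
  simp [hf.mul_eq u v]

theorem repr_mul_repr_eq_zero (hf : IsIII04Family lam' mu' f) {u v : B} (huv : u * v = 0) :
    f.repr u 0 * f.repr v 0 = 0 ∧ f.repr u 1 * f.repr v 1 = 0 ∧
      mu' * (f.repr u 2 * f.repr v 2) = 0 := by
  have h₀ := hf.repr_mul_zero u v
  have h₁ := hf.repr_mul_one u v
  have h₂ := hf.repr_mul_two u v
  simp only [huv, map_zero, Finsupp.zero_apply] at h₀ h₁ h₂
  exact ⟨h₁.symm, h₂.symm, by simpa [← h₂] using h₀.symm⟩

variable [NoZeroDivisors R] {w : Fin 3 → B}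

theorem repr_apply_zero_one_eq_zero (hf : IsIII04Family lam' mu' f) (hw : IsIII04Family lam mu w)
    (hlam : lam ≠ 0) (hmu : mu ≠ 0) : f.repr (w 0) 1 = 0 := by
  obtain ⟨-, hx₁z₁, -⟩ := hf.repr_mul_repr_eq_zero (hw.mul_eq_zero_of_ne 0 2 (by decide))
  obtain ⟨hy₀z₀, -, -⟩ := hf.repr_mul_repr_eq_zero (hw.mul_eq_zero_of_ne 1 2 (by decide))
  have hy₀_sq := hf.repr_mul_one (w 1) (w 1)
  have hz₀_sq := hf.repr_mul_one (w 2) (w 2)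
  simp only [hw.apply_one_mul_self, hw.apply_two_mul_self, map_add, map_smul, Finsupp.add_apply,
    Finsupp.smul_apply, smul_eq_mul] at hy₀_sq hz₀_sq
  by_contra hx₁
  have hz₁ : f.repr (w 2) 1 = 0 := (mul_eq_zero.1 hx₁z₁).resolve_left hx₁
  have hy₀ : f.repr (w 1) 0 ≠ 0 := by
    intro hy₀
    simp [hz₁, hy₀, hlam, hx₁] at hy₀_sq
  have hz₀ : f.repr (w 2) 0 = 0 := (mul_eq_zero.1 hy₀z₀).resolve_left hy₀
  simp [hz₀, hmu, hx₁] at hz₀_sq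

theorem repr_apply_zero_two_eq_zero (hf : IsIII04Family lam' mu' f) (hw : IsIII04Family lam mu w)
    (hlam : lam ≠ 0) (hmu : mu ≠ 0) : f.repr (w 0) 2 = 0 := by
  have hx₁ := hf.repr_apply_zero_one_eq_zero hw hlam hmu
  obtain ⟨-, -, hx₂z₂⟩ := hf.repr_mul_repr_eq_zero (hw.mul_eq_zero_of_ne 0 2 (by decide))
  obtain ⟨-, hy₁z₁, -⟩ := hf.repr_mul_repr_eq_zero (hw.mul_eq_zero_of_ne 1 2 (by decide))
  have hy₀_eq := hf.repr_mul_zero (w 0) (w 0)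
  have hy₀_sq := hf.repr_mul_one (w 1) (w 1)
  have hy₁_sq := hf.repr_mul_two (w 1) (w 1)
  have hz₁_sq := hf.repr_mul_two (w 2) (w 2)
  simp only [hw.apply_zero_mul_self, hw.apply_one_mul_self, hw.apply_two_mul_self, map_add,
    map_smul, Finsupp.add_apply, Finsupp.smul_apply, smul_eq_mul, hx₁, mul_zero, zero_add]
    at hy₀_eq hy₀_sq hy₁_sq hz₁_sq
  by_contra hx₂
  have hz₁ : f.repr (w 2) 1 ≠ 0 := by
    intro hz₁
    simp [hz₁, hmu, hx₂] at hz₁_sq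
  have hy₁ : f.repr (w 1) 1 = 0 := (mul_eq_zero.1 hy₁z₁).resolve_right hz₁
  have hmu' : mu' = 0 := by
    -- Expresses `z₂ = -λx₂` without negation, which a semiring lacks.
    have : mu' * (lam * f.repr (w 0) 2 * f.repr (w 0) 2) = 0 :=
      calc mu' * (lam * f.repr (w 0) 2 * f.repr (w 0) 2)
        _ = mu' * (lam * f.repr (w 0) 2 * f.repr (w 0) 2) +
            mu' * (f.repr (w 0) 2 * f.repr (w 2) 2) := by rw [hx₂z₂, add_zero]
        _ = mu' * f.repr (w 0) 2 * (lam * f.repr (w 0) 2 + f.repr (w 2) 2) := by ring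
        _ = 0 := by rw [hy₁_sq, hy₁, mul_zero, mul_zero]
    simpa [hlam, hx₂] using this
  have hy₀ : f.repr (w 1) 0 = 0 := by simpa [hmu'] using hy₀_eq
  exact hz₁ (by simpa [hy₀] using hy₀_sq)

theorem exists_apply_zero_eq_smul (hf : IsIII04Family lam' mu' f) (hw : IsIII04Family lam mu w)
    (hlam : lam ≠ 0) (hmu : mu ≠ 0) :
    ∃ x : R, w 0 = x • f 0 ∧ lam * x = lam' * x ^ 4 ∧ mu * x = mu' * x ^ 8 := by
  obtain ⟨x, hw₀⟩ : ∃ x : R, w 0 = x • f 0 := by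
    refine ⟨f.repr (w 0) 0, ?_⟩
    conv_lhs => rw [← f.sum_repr (w 0), Fin.sum_univ_three,
      hf.repr_apply_zero_one_eq_zero hw hlam hmu, hf.repr_apply_zero_two_eq_zero hw hlam hmu]
    simp only [zero_smul, add_zero]
  have hw₁ : w 1 = x ^ 2 • f 1 := by
    rw [← hw.apply_zero_mul_self, hw₀, smul_mul_smul_comm, hf.apply_zero_mul_self, sq]
  have hy₁ : f.repr (w 1) 1 = x ^ 2 := by simp [hw₁]
  have hy₂ : f.repr (w 1) 2 = 0 := by simp [hw₁]
  have hz₀ : f.repr (w 2) 0 = 0 := by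
    simpa [hw.apply_two_mul_self, hw₀] using hf.repr_mul_one (w 2) (w 2)
  have hz₁ : f.repr (w 2) 1 = 0 := by
    simpa [hw.apply_two_mul_self, hw₀] using hf.repr_mul_two (w 2) (w 2)
  have hz₂ : f.repr (w 2) 2 = x ^ 4 := by
    simpa [hw.apply_one_mul_self, hw₀, hy₁, ← pow_add] using hf.repr_mul_two (w 1) (w 1)
  refine ⟨x, hw₀, ?_, ?_⟩
  · simpa [hw.apply_one_mul_self, hw₀, hy₁, hy₂, hz₀, ← pow_add] using hf.repr_mul_zero (w 1) (w 1)
  · simpa [hw.apply_two_mul_self, hw₀, hz₁, hz₂, ← pow_add] using hf.repr_mul_zero (w 2) (w 2)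

end Coordinates

end IsIII04Family

theorem III04_iso_iff_general {R A B : Type*} [CommSemiring R] [NoZeroDivisors R]
    [NonUnitalNonAssocSemiring A] [Module R A] [SMulCommClass R A A] [IsScalarTower R A A]
    [NonUnitalNonAssocSemiring B] [Module R B] [SMulCommClass R B B] [IsScalarTower R B B]
    {lam mu lam' mu' : R} (hlam : lam ≠ 0) (hmu : mu ≠ 0)
    {e : Basis (Fin 3) R A} (he : IsIII04Family lam mu e)
    {f : Basis (Fin 3) R B} (hf : IsIII04Family lam' mu' f) :
    (∃ φ : A ≃ₗ[R] B, ∀ x y : A, φ (x * y) = φ x * φ y) ↔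
      ∃ k : Rˣ, lam' = k ^ 3 * lam ∧ mu' = k ^ 7 * mu := by
  rw [he.exists_linearEquiv_map_mul_iff]
  constructor
  · rintro ⟨w, hw⟩
    obtain ⟨x, hw₀, hlamx, hmux⟩ := hf.exists_apply_zero_eq_smul hw hlam hmu
    obtain ⟨x, rfl⟩ := isUnit_of_basis_apply_eq_smul w hw₀
    exact ⟨x⁻¹, (mul_unit_eq_mul_pow_succ_iff x 3).1 hlamx,
      (mul_unit_eq_mul_pow_succ_iff x 7).1 hmux⟩
  · rintro ⟨k, hlam', hmu'⟩
    have scaled_family := hf.pow_smul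
      ((mul_unit_eq_mul_pow_succ_iff k⁻¹ 3).2 (by rwa [inv_inv]))
      ((mul_unit_eq_mul_pow_succ_iff k⁻¹ 7).2 (by rwa [inv_inv]))
    refine ⟨f.unitsSMul fun i => k⁻¹ ^ 2 ^ (i : ℕ), ?_⟩
    convert scaled_family using 2 with i
    simp [Basis.unitsSMul_apply, Units.smul_def]

/-- For `λ, μ ∈ K^×`, `III⁰⁴_{λ,μ}` is the evolution algebra with natural
basis `{e₁,e₂,e₃}` and structure matrix with rows `(0,λ,μ),(1,0,0),(0,1,0)` (the `i`-th column
holds the coordinates of `e_i²`), i.e. `e₁² = e₂`, `e₂² = λe₁ + e₃`, `e₃² = μe₁`, and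
`e_i e_j = 0` for `i ≠ j`.  Then `III⁰⁴_{λ,μ} ≅ III⁰⁴_{λ',μ'}` as `K`-algebras iff there is
`k ∈ K^×` with `λ' = k³λ` and `μ' = k⁷μ`. -/
theorem III04_iso_iff {K A B : Type*} [Field K]
    [NonUnitalNonAssocCommRing A] [Module K A] [SMulCommClass K A A] [IsScalarTower K A A]
    [NonUnitalNonAssocCommRing B] [Module K B] [SMulCommClass K B B] [IsScalarTower K B B]
    (lam mu lam' mu' : K) (hlam : lam ≠ 0) (hmu : mu ≠ 0)
    (hlam' : lam' ≠ 0) (hmu' : mu' ≠ 0)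
    (e : Module.Basis (Fin 3) K A) (hen : ∀ i j : Fin 3, i ≠ j → e i * e j = 0)
    (he0 : e 0 * e 0 = e 1) (he1 : e 1 * e 1 = lam • e 0 + e 2)
    (he2 : e 2 * e 2 = mu • e 0)
    (f : Module.Basis (Fin 3) K B) (hfn : ∀ i j : Fin 3, i ≠ j → f i * f j = 0)
    (hf0 : f 0 * f 0 = f 1) (hf1 : f 1 * f 1 = lam' • f 0 + f 2)
    (hf2 : f 2 * f 2 = mu' • f 0) :
    (∃ φ : A ≃ₗ[K] B, ∀ x y : A, φ (x * y) = φ x * φ y) ↔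
      ∃ k : K, k ≠ 0 ∧ lam' = k ^ 3 * lam ∧ mu' = k ^ 7 * mu :=
  (III04_iso_iff_general hlam hmu ⟨hen, he0, he1, he2⟩ ⟨hfn, hf0, hf1, hf2⟩).trans <| by
    simp [Units.exists0, and_left_comm]
end

section
/- For λ, μ, δ ∈ K^× with λμ + δ ≠ 0, let ₄III²⁶_{λ,μ,δ} be the evolution algebra on K³ with natural basis {e₁,e₂,e₃} and products e₁² = e₁ + λe₃, e₂² = e₂ + e₃, e₃² = μe₁ + δe₂, e_i e_j = 0 for i ≠ j (structure matrix with rows (1,0,μ),(0,1,δ),(λ,1,0)). Then ₄III²⁶_{λ,μ,δ} and ₄III²⁶_{λ',μ',δ'} (parameters in K^× with λμ + δ ≠ 0 and λ'μ' + δ' ≠ 0) are isomorphic as K-algebras if and only if (λ',μ',δ') = (λ,μ,δ) or (λ',μ',δ') = (λ^(−1), λ²δ, λ²μ). -/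
/-!
In an evolution algebra with invertible structure matrix, `x * y = 0` forces the coordinates of `x`
and `y` to have disjoint supports. Hence a natural basis of such an algebra is unique up to
permutation and rescaling, and two algebras with structure matrices `M` and `N` are isomorphic iff
`M k i * c k = c i ^ 2 * N (σ k) (σ i)` for some permutation `σ` and nonzero scalars `c`.
For the matrices at hand only the last diagonal entry vanishes, so `σ` fixes the last index. The
two permutations that do so lead to the two alternatives of the theorem, with `c = (1, 1, 1)` and
`c = (1, 1, lam⁻¹)` respectively.
-/

open Equiv Module

theorem exists_perm_forall_ne_zero_iff {ι M₀ : Type*} [Finite ι] [MulZeroClass M₀]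
    [NoZeroDivisors M₀] {P : ι → ι → M₀} (exists_ne : ∀ i, ∃ k, P i k ≠ 0)
    (mul_eq : ∀ i j, i ≠ j → ∀ k, P i k * P j k = 0) :
    ∃ σ : Perm ι, ∀ i k, P i k ≠ 0 ↔ k = σ i := by
  choose s hs using exists_ne
  have eq_of_ne_zero {i j k} (hi : P i k ≠ 0) (hj : P j k ≠ 0) : i = j :=
    by_contra fun hij ↦ mul_ne_zero hi hj (mul_eq i j hij k)
  have s_injective : s.Injective := fun i j hij ↦ eq_of_ne_zero (hs i) (hij ▸ hs j)
  let σ : Perm ι := .ofBijective s (Finite.injective_iff_bijective.mp s_injective)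
  refine ⟨σ, fun i k ↦ ⟨fun hik ↦ ?_, fun hk ↦ hk ▸ hs i⟩⟩
  obtain ⟨j, rfl⟩ := σ.surjective k
  rw [eq_of_ne_zero hik (hs j)]

/-- The basis `b` is a natural basis of the (evolution) algebra `A`, and `M` is its structure
matrix. The coordinates of `b i * b i` are the `i`-th *column* of `M`. -/
structure HasStructureMatrix {ι K A : Type*} [Fintype ι] [Semiring K]
    [NonUnitalNonAssocSemiring A] [Module K A] (b : Basis ι K A) (M : Matrix ι ι K) : Prop where
  mul_of_ne : ∀ i j, i ≠ j → b i * b j = 0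
  mul_self : ∀ i, b i * b i = ∑ k, M k i • b k

namespace HasStructureMatrix

section Semiring

variable {ι K A B : Type*} [Fintype ι] [Semiring K]
  [NonUnitalNonAssocSemiring A] [Module K A] [NonUnitalNonAssocSemiring B] [Module K B]
  {b : Basis ι K A} {M N : Matrix ι ι K}

theorem repr_mul_self (hb : HasStructureMatrix b M) (i k : ι) : b.repr (b i * b i) k = M k i := by
  rw [hb.mul_self, b.repr_sum_self]

theorem unique (hM : HasStructureMatrix b M) (hN : HasStructureMatrix b N) : M = N := by
  ext k i
  rw [← hM.repr_mul_self, hN.repr_mul_self]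

theorem map (hb : HasStructureMatrix b M) (φ : A ≃ₗ[K] B) (hφ : ∀ x y, φ (x * y) = φ x * φ y) :
    HasStructureMatrix (b.map φ) M where
  mul_of_ne i j hij := by simp only [Basis.map_apply, ← hφ, hb.mul_of_ne i j hij, map_zero]
  mul_self i := by simp only [Basis.map_apply, ← hφ, hb.mul_self, map_sum, map_smul]

theorem reindex (hb : HasStructureMatrix b M) (σ : Perm ι) :
    HasStructureMatrix (b.reindex σ) (M.reindex σ σ) where
  mul_of_ne i j hij := by
    simpa only [Basis.reindex_apply] using hb.mul_of_ne _ _ (σ.symm.injective.ne hij)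
  mul_self i := by
    simpa only [Basis.reindex_apply, Matrix.reindex_apply, Matrix.submatrix_apply, hb.mul_self]
      using (σ.symm.sum_comp fun k ↦ M k (σ.symm i) • b k).symm

end Semiring

section CommSemiring

variable {ι K A B : Type*} [Fintype ι] [CommSemiring K]
  [NonUnitalNonAssocSemiring A] [Module K A] [SMulCommClass K A A] [IsScalarTower K A A]
  [NonUnitalNonAssocSemiring B] [Module K B] [SMulCommClass K B B] [IsScalarTower K B B]
  {b : Basis ι K A} {M N : Matrix ι ι K}

theorem unitsSMul (hb : HasStructureMatrix b M) (c : ι → Kˣ) :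
    HasStructureMatrix (b.unitsSMul c) (.of fun k i ↦ c i ^ 2 * M k i * (c k)⁻¹) where
  mul_of_ne i j hij := by
    simp only [Basis.unitsSMul_apply, smul_mul_smul_comm, hb.mul_of_ne i j hij, smul_zero]
  mul_self i := by
    simp only [Basis.unitsSMul_apply, smul_mul_smul_comm, hb.mul_self, Finset.smul_sum,
      Units.smul_def, smul_smul, Matrix.of_apply, Units.inv_mul_cancel_right, sq]

theorem unitsSMul_reindex_iff (hb : HasStructureMatrix b N) (σ : Perm ι) (c : ι → Kˣ) :
    HasStructureMatrix ((b.reindex σ.symm).unitsSMul c) M ↔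
      ∀ i k, M k i * c k = c i ^ 2 * N (σ k) (σ i) := by
  have hbc := (hb.reindex σ.symm).unitsSMul c
  have iff_eq : HasStructureMatrix ((b.reindex σ.symm).unitsSMul c) M ↔
      M = .of fun k i ↦ c i ^ 2 * N (σ k) (σ i) * (c k)⁻¹ :=
    ⟨fun h ↦ h.unique hbc, fun h ↦ h ▸ hbc⟩
  simp only [iff_eq, ← Matrix.ext_iff, Matrix.of_apply, Units.eq_mul_inv_iff_mul_eq]
  exact forall_comm

theorem repr_mul (hb : HasStructureMatrix b M) (x y : A) :
    ⇑(b.repr (x * y)) = M.mulVec fun k ↦ b.repr x k * b.repr y k := by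
  classical
  have mul_basis (i j : ι) : b i * b j = if i = j then ∑ k, M k i • b k else 0 := by
    split_ifs with hij
    · rw [← hij, hb.mul_self]
    · exact hb.mul_of_ne i j hij
  have mul_eq : x * y = ∑ k, M.mulVec (fun k ↦ b.repr x k * b.repr y k) k • b k := by
    conv_lhs => rw [← b.sum_repr x, ← b.sum_repr y]
    simp only [Finset.sum_mul_sum, smul_mul_smul_comm, mul_basis, smul_ite, smul_zero,
      Finset.sum_ite_eq, Finset.mem_univ, if_true, Finset.smul_sum, smul_smul,
      Matrix.mulVec, dotProduct, Finset.sum_smul]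
    rw [Finset.sum_comm]
    simp only [mul_comm]
  ext k
  rw [mul_eq, b.repr_sum_self]

theorem equiv_mul {f : Basis ι K B} (hb : HasStructureMatrix b M) (hf : HasStructureMatrix f M)
    (x y : A) : b.equiv f (.refl ι) (x * y) = b.equiv f (.refl ι) x * b.equiv f (.refl ι) y := by
  apply f.repr.injective
  ext k
  have repr_equiv (z : A) : f.repr (b.equiv f (.refl ι) z) = b.repr z := by
    simp [Basis.equiv]
  simp only [hf.repr_mul, repr_equiv, hb.repr_mul]

end CommSemiring

theorem repr_mul_repr_eq_zero {ι K A : Type*} [Fintype ι] [DecidableEq ι] [CommRing K] [IsDomain K]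
    [NonUnitalNonAssocSemiring A] [Module K A] [SMulCommClass K A A] [IsScalarTower K A A]
    {b : Basis ι K A} {M : Matrix ι ι K} (hb : HasStructureMatrix b M) (hM : M.det ≠ 0)
    {x y : A} (hxy : x * y = 0) (k : ι) : b.repr x k * b.repr y k = 0 := by
  have mulVec_eq_zero : M.mulVec (fun k ↦ b.repr x k * b.repr y k) = 0 := by
    rw [← hb.repr_mul, hxy, map_zero, Finsupp.coe_zero]
  exact congrFun (Matrix.eq_zero_of_mulVec_eq_zero hM mulVec_eq_zero) k

section Field

variable {ι K A B : Type*} [Fintype ι] [DecidableEq ι] [Field K]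
  [NonUnitalNonAssocSemiring A] [Module K A]
  [NonUnitalNonAssocSemiring B] [Module K B] [SMulCommClass K B B] [IsScalarTower K B B]
  {M N : Matrix ι ι K}

theorem exists_eq_unitsSMul_reindex {e f : Basis ι K B} (he : HasStructureMatrix e M)
    (hf : HasStructureMatrix f N) (hN : N.det ≠ 0) :
    ∃ (σ : Perm ι) (c : ι → Kˣ), e = (f.reindex σ.symm).unitsSMul c := by
  have exists_repr_ne_zero (i : ι) : ∃ k, f.repr (e i) k ≠ 0 :=
    Finsupp.ne_iff.mp (f.repr.map_ne_zero_iff.mpr (e.ne_zero i))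
  obtain ⟨σ, hσ⟩ := exists_perm_forall_ne_zero_iff exists_repr_ne_zero
    fun i j hij ↦ hf.repr_mul_repr_eq_zero hN (he.mul_of_ne i j hij)
  refine ⟨σ, fun i ↦ .mk0 _ ((hσ i (σ i)).mpr rfl), Basis.eq_of_apply_eq fun i ↦ ?_⟩
  have repr_eq_zero (k : ι) (hk : k ≠ σ i) : f.repr (e i) k = 0 :=
    not_not.mp fun h ↦ hk ((hσ i k).mp h)
  calc
    e i = ∑ k, f.repr (e i) k • f k := (f.sum_repr _).symm
    _ = f.repr (e i) (σ i) • f (σ i) :=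
      Fintype.sum_eq_single _ fun k hk ↦ by rw [repr_eq_zero k hk, zero_smul]
    _ = (f.reindex σ.symm).unitsSMul _ i := by
      rw [Basis.unitsSMul_apply, Basis.reindex_apply, symm_symm, Units.smul_def, Units.val_mk0]

theorem exists_linearEquiv_map_mul_iff [SMulCommClass K A A] [IsScalarTower K A A]
    {e : Basis ι K A} {f : Basis ι K B}
    (he : HasStructureMatrix e M) (hf : HasStructureMatrix f N) (hN : N.det ≠ 0) :
    (∃ φ : A ≃ₗ[K] B, ∀ x y, φ (x * y) = φ x * φ y) ↔
      ∃ (σ : Perm ι) (c : ι → Kˣ), ∀ i k, M k i * c k = c i ^ 2 * N (σ k) (σ i) := by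
  simp only [← hf.unitsSMul_reindex_iff]
  constructor
  · rintro ⟨φ, hφ⟩
    have heφ := he.map φ hφ
    obtain ⟨σ, c, h⟩ := heφ.exists_eq_unitsSMul_reindex hf hN
    exact ⟨σ, c, h ▸ heφ⟩
  · rintro ⟨σ, c, hfc⟩
    exact ⟨_, he.equiv_mul hfc⟩

end Field

end HasStructureMatrix

/-- The structure matrix of the algebra `₄III²⁶` with parameters `lam`, `mu`, `del`. -/
def structureMatrixIII26 {K : Type*} [Zero K] [One K] (lam mu del : K) :
    Matrix (Fin 3) (Fin 3) K :=
  !![1, 0, mu; 0, 1, del; lam, 1, 0]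

theorem hasStructureMatrix_structureMatrixIII26 {K A : Type*} [Semiring K]
    [NonUnitalNonAssocSemiring A] [Module K A] {lam mu del : K} {b : Basis (Fin 3) K A}
    (mul_of_ne : ∀ i j, i ≠ j → b i * b j = 0)
    (mul_self_zero : b 0 * b 0 = b 0 + lam • b 2) (mul_self_one : b 1 * b 1 = b 1 + b 2)
    (mul_self_two : b 2 * b 2 = mu • b 0 + del • b 1) :
    HasStructureMatrix b (structureMatrixIII26 lam mu del) where
  mul_of_ne := mul_of_ne
  mul_self i := by
    fin_cases i <;>
      simp [structureMatrixIII26, Fin.sum_univ_three, mul_self_zero, mul_self_one, mul_self_two]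

theorem det_structureMatrixIII26 {K : Type*} [CommRing K] (lam mu del : K) :
    (structureMatrixIII26 lam mu del).det = -(lam * mu + del) := by
  simp only [structureMatrixIII26, Matrix.det_fin_three, Matrix.of_apply, Matrix.cons_val]
  ring

theorem structureMatrixIII26_diag_eq_zero_iff {K : Type*} [MulZeroOneClass K] [Nontrivial K]
    (lam mu del : K) (i : Fin 3) : structureMatrixIII26 lam mu del i i = 0 ↔ i = 2 := by
  fin_cases i <;> simp [structureMatrixIII26]

theorem eq_one_or_eq_swap_of_apply_two_eq_two {σ : Perm (Fin 3)} (hσ : σ 2 = 2) :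
    σ = 1 ∨ σ = swap 0 1 := by
  decide +revert

section Rescaling

variable {K : Type*} [Field K] {lam mu del lam' mu' del' : K}

theorem eq_one_or_eq_swap_of_rescaling {σ : Perm (Fin 3)} {c : Fin 3 → Kˣ}
    (h : ∀ i k, structureMatrixIII26 lam mu del k i * c k =
      c i ^ 2 * structureMatrixIII26 lam' mu' del' (σ k) (σ i)) :
    σ = 1 ∨ σ = swap 0 1 := by
  have hσ := h 2 2
  rw [(structureMatrixIII26_diag_eq_zero_iff lam mu del 2).mpr rfl, zero_mul, eq_comm,
    mul_eq_zero_iff_left (pow_ne_zero 2 (c 2).ne_zero),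
    structureMatrixIII26_diag_eq_zero_iff] at hσ
  exact eq_one_or_eq_swap_of_apply_two_eq_two hσ

theorem exists_rescaling_one_iff :
    (∃ c : Fin 3 → Kˣ, ∀ i k, structureMatrixIII26 lam mu del k i * c k =
      c i ^ 2 * structureMatrixIII26 lam' mu' del' k i) ↔
      lam' = lam ∧ mu' = mu ∧ del' = del := by
  constructor
  · rintro ⟨c, h⟩
    have c_zero : (c 0 : K) = 1 := by simpa [structureMatrixIII26, sq] using h 0 0
    have c_one : (c 1 : K) = 1 := by simpa [structureMatrixIII26, sq] using h 1 1
    have c_two : (c 2 : K) = 1 := by simpa [structureMatrixIII26, c_one] using h 1 2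
    exact ⟨by simpa [structureMatrixIII26, c_zero, c_two] using (h 0 2).symm,
      by simpa [structureMatrixIII26, c_zero, c_two] using (h 2 0).symm,
      by simpa [structureMatrixIII26, c_one, c_two] using (h 2 1).symm⟩
  · rintro ⟨rfl, rfl, rfl⟩
    exact ⟨1, by simp⟩

theorem exists_rescaling_swap_iff (hlam : lam ≠ 0) :
    (∃ c : Fin 3 → Kˣ, ∀ i k, structureMatrixIII26 lam mu del k i * c k =
      c i ^ 2 * structureMatrixIII26 lam' mu' del' (swap 0 1 k) (swap 0 1 i)) ↔
      lam' = lam⁻¹ ∧ mu' = lam ^ 2 * del ∧ del' = lam ^ 2 * mu := by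
  have swap_two : swap (0 : Fin 3) 1 2 = 2 := by decide
  constructor
  · rintro ⟨c, h⟩
    have c_zero : (c 0 : K) = 1 := by simpa [structureMatrixIII26, sq] using h 0 0
    have c_one : (c 1 : K) = 1 := by simpa [structureMatrixIII26, sq] using h 1 1
    have c_two : (c 2 : K) = lam⁻¹ := eq_inv_of_mul_eq_one_right <| by
      simpa [structureMatrixIII26, swap_two, c_zero] using h 0 2
    have lam'_eq : lam⁻¹ = lam' := by
      simpa [structureMatrixIII26, swap_two, c_one, c_two] using h 1 2
    have mu_eq : mu = (lam ^ 2)⁻¹ * del' := by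
      simpa [structureMatrixIII26, swap_two, c_zero, c_two] using h 2 0
    have del_eq : del = (lam ^ 2)⁻¹ * mu' := by
      simpa [structureMatrixIII26, swap_two, c_one, c_two] using h 2 1
    have lam_sq : lam ^ 2 ≠ 0 := pow_ne_zero 2 hlam
    exact ⟨lam'_eq.symm, by rw [del_eq, mul_inv_cancel_left₀ lam_sq],
      by rw [mu_eq, mul_inv_cancel_left₀ lam_sq]⟩
  · rintro ⟨rfl, rfl, rfl⟩
    refine ⟨![1, 1, .mk0 lam⁻¹ (inv_ne_zero hlam)], fun i k ↦ ?_⟩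
    fin_cases i <;> fin_cases k <;> simp [structureMatrixIII26, swap_two, hlam]

theorem exists_perm_rescaling_iff (hlam : lam ≠ 0) :
    (∃ (σ : Perm (Fin 3)) (c : Fin 3 → Kˣ), ∀ i k, structureMatrixIII26 lam mu del k i * c k =
      c i ^ 2 * structureMatrixIII26 lam' mu' del' (σ k) (σ i)) ↔
      (lam' = lam ∧ mu' = mu ∧ del' = del) ∨
      (lam' = lam⁻¹ ∧ mu' = lam ^ 2 * del ∧ del' = lam ^ 2 * mu) := by
  rw [← exists_rescaling_one_iff, ← exists_rescaling_swap_iff hlam]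
  constructor
  · rintro ⟨σ, c, h⟩
    rcases eq_one_or_eq_swap_of_rescaling h with rfl | rfl
    · exact .inl ⟨c, h⟩
    · exact .inr ⟨c, h⟩
  · rintro (h | h)
    · exact ⟨1, h⟩
    · exact ⟨swap 0 1, h⟩

end Rescaling

/-- For `λ, μ, δ ∈ K^×` with `λμ + δ ≠ 0`, `₄III²⁶_{λ,μ,δ}` is the
evolution algebra with natural basis `{e₁,e₂,e₃}`, structure matrix with rows
`(1,0,μ),(0,1,δ),(λ,1,0)`, i.e. `e₁² = e₁ + λe₃`, `e₂² = e₂ + e₃`, `e₃² = μe₁ + δe₂`, and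
`e_i e_j = 0` for `i ≠ j`.  Then `₄III²⁶_{λ,μ,δ} ≅ ₄III²⁶_{λ',μ',δ'}` as `K`-algebras iff
`(λ',μ',δ') = (λ,μ,δ)` or `(λ',μ',δ') = (λ⁻¹, λ²δ, λ²μ)`. -/
theorem III26_4_iso_iff {K A B : Type*} [Field K]
    [NonUnitalNonAssocCommRing A] [Module K A] [SMulCommClass K A A] [IsScalarTower K A A]
    [NonUnitalNonAssocCommRing B] [Module K B] [SMulCommClass K B B] [IsScalarTower K B B]
    (lam mu del lam' mu' del' : K)
    (hlam : lam ≠ 0) (hmu : mu ≠ 0) (hdel : del ≠ 0)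
    (hlam' : lam' ≠ 0) (hmu' : mu' ≠ 0) (hdel' : del' ≠ 0)
    (hD : lam * mu + del ≠ 0) (hD' : lam' * mu' + del' ≠ 0)
    (e : Module.Basis (Fin 3) K A) (hen : ∀ i j : Fin 3, i ≠ j → e i * e j = 0)
    (he0 : e 0 * e 0 = e 0 + lam • e 2) (he1 : e 1 * e 1 = e 1 + e 2)
    (he2 : e 2 * e 2 = mu • e 0 + del • e 1)
    (f : Module.Basis (Fin 3) K B) (hfn : ∀ i j : Fin 3, i ≠ j → f i * f j = 0)
    (hf0 : f 0 * f 0 = f 0 + lam' • f 2) (hf1 : f 1 * f 1 = f 1 + f 2)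
    (hf2 : f 2 * f 2 = mu' • f 0 + del' • f 1) :
    (∃ φ : A ≃ₗ[K] B, ∀ x y : A, φ (x * y) = φ x * φ y) ↔
      (lam' = lam ∧ mu' = mu ∧ del' = del) ∨
      (lam' = lam⁻¹ ∧ mu' = lam ^ 2 * del ∧ del' = lam ^ 2 * mu) := by
  have he := hasStructureMatrix_structureMatrixIII26 hen he0 he1 he2
  have hf := hasStructureMatrix_structureMatrixIII26 hfn hf0 hf1 hf2
  have det_ne_zero : (structureMatrixIII26 lam' mu' del').det ≠ 0 := by
    rw [det_structureMatrixIII26]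
    exact neg_ne_zero.mpr hD'
  exact (he.exists_linearEquiv_map_mul_iff hf det_ne_zero).trans (exists_perm_rescaling_iff hlam)
end
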